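/- Let α > 0, let b ∈ ℝ, and let s > 0 satisfy |b| < s^α. Then ∫_0^∞ e^{-st} t^{α-1} E_{α,α}(-b t^α) dt = 1 / (s^α + b). -/

import Mathlib

/-!
Laplace's integral `∫₀^∞ e^{-st} t^{p-1} / Γ(p) dt = s^{-p}` turns the expansion of
`t^{β-1} E_{α,β}(c t^α)` in the functions `t^{αk+β-1} / Γ(αk+β)` into `∑ₖ s^{-(αk+β)} cᵏ`, which is
`s^{α-β}` times the Neumann series of `(s^α - c)⁻¹`. The factors `Γ(αk+β)` cancel in the integrals
of the norms as well, so absolute convergence of the Neumann series, which holds when `‖c‖ < s^α`,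
is what justifies integrating term by term.
-/

open MeasureTheory Set

section LaplaceTransform

variable {s p : ℝ}

theorem integrableOn_exp_neg_mul_rpow_div_Gamma (hs : 0 < s) (hp : 0 < p) :
    IntegrableOn (fun t ↦ Real.exp (-(s * t)) * (t ^ (p - 1) / Real.Gamma p)) (Ioi 0) := by
  have h : IntegrableOn (fun t ↦ t ^ (p - 1) * Real.exp (-s * t ^ (1 : ℝ))) (Ioi 0) :=
    integrableOn_rpow_mul_exp_neg_mul_rpow (by linarith) one_pos hs
  refine (h.div_const (Real.Gamma p)).congr (.of_forall fun t ↦ ?_)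
  simp only [Real.rpow_one, neg_mul]
  ring

theorem integral_exp_neg_mul_rpow_div_Gamma (hs : 0 < s) (hp : 0 < p) :
    ∫ t in Ioi 0, Real.exp (-(s * t)) * (t ^ (p - 1) / Real.Gamma p) = s ^ (-p) := by
  have hΓ : Real.Gamma p ≠ 0 := (Real.Gamma_pos_of_pos hp).ne'
  calc ∫ t in Ioi 0, Real.exp (-(s * t)) * (t ^ (p - 1) / Real.Gamma p)
      = (∫ t in Ioi 0, t ^ (p - 1) * Real.exp (-(s * t))) / Real.Gamma p := by
        rw [← integral_div]
        congr! 2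
        ring
    _ = s ^ (-p) := by
        rw [Real.integral_rpow_mul_exp_neg_mul_Ioi hp hs, mul_div_cancel_right₀ _ hΓ, one_div,
          Real.inv_rpow hs.le, Real.rpow_neg hs.le]

theorem integral_exp_neg_mul_smul_tsum_rpow_div_Gamma {ι E : Type*} [Countable ι]
    [NormedAddCommGroup E] [NormedSpace ℝ E] [CompleteSpace E] {q : ι → ℝ} {a : ι → E}
    (hs : 0 < s) (hq : ∀ i, 0 < q i) (ha : Summable fun i ↦ ‖s ^ (-q i) • a i‖) :
    ∫ t in Ioi 0, Real.exp (-(s * t)) • ∑' i, (t ^ (q i - 1) / Real.Gamma (q i)) • a i =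
      ∑' i, s ^ (-q i) • a i := by
  let F (i : ι) (t : ℝ) : E := (Real.exp (-(s * t)) * (t ^ (q i - 1) / Real.Gamma (q i))) • a i
  have integrable_F (i : ι) : IntegrableOn (F i) (Ioi 0) :=
    (integrableOn_exp_neg_mul_rpow_div_Gamma hs (hq i)).smul_const (a i)
  have integral_F (i : ι) : ∫ t in Ioi 0, F i t = s ^ (-q i) • a i := by
    rw [integral_smul_const, integral_exp_neg_mul_rpow_div_Gamma hs (hq i)]
  have integral_norm_F (i : ι) : ∫ t in Ioi 0, ‖F i t‖ = ‖s ^ (-q i) • a i‖ := by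
    have norm_F : EqOn (‖F i ·‖)
        (fun t ↦ Real.exp (-(s * t)) * (t ^ (q i - 1) / Real.Gamma (q i)) * ‖a i‖) (Ioi 0) := by
      intro t (ht : 0 < t)
      have hΓ : 0 < Real.Gamma (q i) := Real.Gamma_pos_of_pos (hq i)
      exact norm_smul_of_nonneg (by positivity) _
    rw [setIntegral_congr_fun measurableSet_Ioi norm_F, integral_mul_const,
      integral_exp_neg_mul_rpow_div_Gamma hs (hq i), norm_smul_of_nonneg (by positivity)]
  calc ∫ t in Ioi 0, Real.exp (-(s * t)) • ∑' i, (t ^ (q i - 1) / Real.Gamma (q i)) • a i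
      = ∫ t in Ioi 0, ∑' i, F i t := by simp only [F, mul_smul, tsum_const_smul'']
    _ = ∑' i, ∫ t in Ioi 0, F i t :=
        (integral_tsum_of_summable_integral_norm integrable_F
          (by simpa only [integral_norm_F] using ha)).symm
    _ = ∑' i, s ^ (-q i) • a i := by simp only [integral_F]

end LaplaceTransform

section NeumannSeries

theorem norm_inv_smul_lt_one {𝕜 E : Type*} [NormedField 𝕜] [SeminormedAddCommGroup E]
    [NormedSpace 𝕜 E] {x : E} {r : 𝕜} (h : ‖x‖ < ‖r‖) : ‖r⁻¹ • x‖ < 1 := by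
  rwa [norm_smul, norm_inv, inv_mul_lt_one₀ ((norm_nonneg x).trans_lt h)]

theorem inv_pow_succ_smul_pow {K A : Type*} [Field K] [Semiring A] [Algebra K A] (c : A) (r : K)
    (k : ℕ) : (r ^ (k + 1))⁻¹ • c ^ k = r⁻¹ • (r⁻¹ • c) ^ k := by
  rw [smul_pow, smul_smul, ← pow_succ', inv_pow]

variable {𝕜 A : Type*} [NormedField 𝕜] [NormedRing A] [NormedAlgebra 𝕜 A] {c : A} {r : 𝕜}

theorem summable_norm_inv_pow_succ_smul_pow (h : ‖c‖ < ‖r‖) :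
    Summable fun k : ℕ ↦ ‖(r ^ (k + 1))⁻¹ • c ^ k‖ := by
  simp only [inv_pow_succ_smul_pow, norm_smul r⁻¹]
  exact (summable_norm_geometric_of_norm_lt_one (norm_inv_smul_lt_one h)).mul_left _

theorem tsum_inv_pow_succ_smul_pow [HasSummableGeomSeries A] (h : ‖c‖ < ‖r‖) :
    ∑' k : ℕ, (r ^ (k + 1))⁻¹ • c ^ k = resolvent c r := by
  have hr : r ≠ 0 := norm_pos_iff.1 ((norm_nonneg c).trans_lt h)
  have hres : r • resolvent c r = Ring.inverse (1 - r⁻¹ • c) := by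
    simpa [resolvent, Units.smul_def] using
      spectrum.units_smul_resolvent_self (r := Units.mk0 r hr) (a := c)
  simp only [inv_pow_succ_smul_pow]
  rw [tsum_const_smul'', geom_series_eq_inverse _ (norm_inv_smul_lt_one h), ← hres,
    inv_smul_smul₀ hr]

end NeumannSeries

section MittagLeffler

variable {A : Type*} [NormedRing A] [NormedAlgebra ℝ A]

/-- The two-parameter Mittag-Leffler function `E_{α,β}(z) = ∑ₖ zᵏ / Γ(αk + β)`, with real
parameters and an argument in a real normed algebra, so that matrix arguments are covered. It takes
the junk value `0` where the series diverges. -/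
noncomputable def mittagLeffler (α β : ℝ) (z : A) : A :=
  ∑' k : ℕ, (Real.Gamma (α * k + β))⁻¹ • z ^ k

theorem rpow_sub_one_smul_mittagLeffler (α β : ℝ) (c : A) {t : ℝ} (ht : 0 < t) :
    t ^ (β - 1) • mittagLeffler α β (t ^ α • c) =
      ∑' k : ℕ, (t ^ (α * k + β - 1) / Real.Gamma (α * k + β)) • c ^ k := by
  have rpow_exponent (k : ℕ) : t ^ (α * k + β - 1) = t ^ (β - 1) * (t ^ α) ^ k := by
    rw [add_sub_assoc, add_comm, Real.rpow_add ht, Real.rpow_mul_natCast ht.le]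
  rw [mittagLeffler, ← tsum_const_smul'']
  refine tsum_congr fun k ↦ ?_
  rw [rpow_exponent, smul_pow, smul_smul, smul_smul]
  congr 1
  ring

theorem laplace_mittagLeffler_two_param_general [CompleteSpace A] {α β s : ℝ} {c : A}
    (hα : 0 ≤ α) (hβ : 0 < β) (hs : 0 < s) (hc : ‖c‖ < s ^ α) :
    ∫ t in Ioi 0, Real.exp (-(s * t)) • t ^ (β - 1) • mittagLeffler α β (t ^ α • c) =
      s ^ (α - β) • resolvent c (s ^ α) := by
  have hc' : ‖c‖ < ‖s ^ α‖ := hc.trans_le (le_abs_self _)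
  have term_eq (k : ℕ) :
      s ^ (-(α * k + β)) • c ^ k = s ^ (α - β) • ((s ^ α) ^ (k + 1))⁻¹ • c ^ k := by
    rw [smul_smul, ← Real.rpow_mul_natCast hs.le, ← Real.rpow_neg hs.le, ← Real.rpow_add hs]
    congr 2
    push_cast
    ring
  have summable_terms : Summable fun k : ℕ ↦ ‖s ^ (-(α * k + β)) • c ^ k‖ := by
    simp only [term_eq, norm_smul (s ^ (α - β))]
    exact (summable_norm_inv_pow_succ_smul_pow hc').mul_left _
  calc ∫ t in Ioi 0, Real.exp (-(s * t)) • t ^ (β - 1) • mittagLeffler α β (t ^ α • c)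
      = ∫ t in Ioi 0, Real.exp (-(s * t)) •
          ∑' k : ℕ, (t ^ (α * k + β - 1) / Real.Gamma (α * k + β)) • c ^ k :=
        setIntegral_congr_fun measurableSet_Ioi fun t ht ↦
          congrArg (Real.exp (-(s * t)) • ·) (rpow_sub_one_smul_mittagLeffler α β c ht)
    _ = ∑' k : ℕ, s ^ (-(α * k + β)) • c ^ k :=
        integral_exp_neg_mul_smul_tsum_rpow_div_Gamma hs (fun k ↦ by positivity) summable_terms
    _ = s ^ (α - β) • resolvent c (s ^ α) := by
        simp only [term_eq, tsum_const_smul'', tsum_inv_pow_succ_smul_pow hc']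

end MittagLeffler

/-- Laplace transform of `t ↦ t^{α-1} E_{α,α}(-b t^α)`:
for `α > 0`, `b ∈ ℝ`, `s > 0` with `|b| < s^α`,
`∫_0^∞ e^{-st} t^{α-1} E_{α,α}(-b t^α) dt = 1/(s^α + b)`. -/
theorem laplace_mittagLeffler_two_param (α b s : ℝ) (hα : 0 < α) (hs : 0 < s)
    (hb : |b| < s ^ α) :
    ∫ t in Set.Ioi (0 : ℝ),
        Real.exp (-(s * t)) * (t ^ (α - 1) *
          ∑' k : ℕ, (-(b * t ^ α)) ^ k / Real.Gamma (α * k + α)) =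
      1 / (s ^ α + b) := by
  have hc : ‖-b‖ < s ^ α := by rwa [norm_neg]
  simpa [mittagLeffler, resolvent, div_eq_inv_mul, mul_comm b] using
    laplace_mittagLeffler_two_param_general hα.le hα hs hc
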